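/- Let u be a C² convex function on a neighborhood of the closed disc B̄_t(0) ⊂ ℝ² with u(0) = 0, u ≥ 0, and det D²u ≥ C₀⁻¹ > 0, and let b := sup_{B̄_t(0)}|Du|. Suppose m > 0 and τ ∈ (0, t] are such that u(x₁, 0) ≤ m for all x₁ ∈ (−τ, t). Then 64·C₀·b/t² ≥ ∫₀^{t/4} (m + 2b·x₂)⁻¹ dx₂, and consequently exp(128·C₀·b²/t²) ≥ 1 + (b·t/2)/m. -/

import Mathlib

open Metric Set MeasureTheory

noncomputable section

abbrev E2 : Type := EuclideanSpace ℝ (Fin 2)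

/-- The point of `ℝ²` with coordinates `(a, b)`. -/
def pt (a b : ℝ) : E2 := (WithLp.equiv 2 (Fin 2 → ℝ)).symm ![a, b]

/-- The standard basis vectors of `ℝ²`. -/
def e2 (i : Fin 2) : E2 := EuclideanSpace.single i 1

/-- The Hessian matrix `D²u(x)`. -/
def hess (u : E2 → ℝ) (x : E2) : Matrix (Fin 2) (Fin 2) ℝ :=
  Matrix.of fun i j => iteratedFDeriv ℝ 2 u x ![e2 i, e2 j]

/-- The determinant of the Hessian, `det D²u(x)`. -/
def detHess (u : E2 → ℝ) (x : E2) : ℝ := (hess u x).det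

/-- The operator norm of a `2 × 2` real matrix. -/
def opNorm2 (M : Matrix (Fin 2) (Fin 2) ℝ) : ℝ :=
  ‖(Matrix.toEuclideanCLM (𝕜 := ℝ) M : E2 →L[ℝ] E2)‖

/-- The partial Legendre transform of `u` in the `e₁`-direction (relative to `B_R(0)`). -/
def pLeg (R : ℝ) (u : E2 → ℝ) (y : E2) : ℝ :=
  sSup ((fun x₁ => x₁ * y 0 - u (pt x₁ (y 1))) '' {x₁ : ℝ | pt x₁ (y 1) ∈ ball (0:E2) R})

/-- The partial Legendre map `𝒫(x₁,x₂) = (∂_{x₁}u(x), x₂)`. -/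
def Pmap (u : E2 → ℝ) (x : E2) : E2 := pt (fderiv ℝ u x (e2 0)) (x 1)

lemma aux_pt0 (a b : ℝ) : pt a b 0 = a := rfl
lemma aux_pt1 (a b : ℝ) : pt a b 1 = b := rfl

lemma aux_norm_pt (a b : ℝ) : ‖pt a b‖ = Real.sqrt (a ^ 2 + b ^ 2) := by
  rw [EuclideanSpace.norm_eq]
  simp [Fin.sum_univ_two, aux_pt0, aux_pt1]

lemma aux_pt_eq (a b : ℝ) : pt a b = a • e2 0 + b • e2 1 := by
  ext i
  fin_cases i <;> simp [pt, e2]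

lemma aux_norm_e2 (i : Fin 2) : ‖e2 i‖ = 1 := by simp [e2]

lemma aux_deriv0 (a b : ℝ) : HasDerivAt (fun s => pt s b) (e2 0) a := by
  simp only [aux_pt_eq]
  simpa using ((hasDerivAt_id a).smul_const (e2 0)).add_const (b • e2 1)

lemma aux_deriv1 (a b : ℝ) : HasDerivAt (fun s => pt a s) (e2 1) b := by
  simp only [aux_pt_eq]
  simpa using ((hasDerivAt_id b).smul_const (e2 1)).const_add (a • e2 0)

lemma aux_cont : Continuous (fun p : ℝ × ℝ => pt p.1 p.2) := by
  simp only [aux_pt_eq]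
  fun_prop

lemma aux_mem {t a b : ℝ} (ht : 0 < t) (h : a ^ 2 + b ^ 2 ≤ t ^ 2) :
    pt a b ∈ closedBall (0:E2) t := by
  rw [mem_closedBall_zero_iff, aux_norm_pt]
  exact Real.sqrt_le_iff.2 ⟨ht.le, h⟩

lemma aux_sign {A B h c : ℝ} (hc : 0 < c) (hA : 0 ≤ A) (hd : c ≤ A * B - h * h) (s : ℝ) :
    c * (2 * s - s ^ 2 * A) ≤ B := by
  have h1 : c ≤ A * B := by nlinarith [mul_self_nonneg h]
  have hA' : 0 < A := by
    rcases hA.lt_or_eq with h2 | h2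
    · exact h2
    · rw [← h2] at h1; linarith
  have h3 : c * (2 * s - s ^ 2 * A) * A ≤ c := by nlinarith [mul_nonneg hc.le (sq_nonneg (s * A - 1))]
  exact le_of_mul_le_mul_right (by linarith) hA'

/-- under the hypotheses of Statement 14, one has
64 C₀ b / t² ≥ ∫₀^{t/4} (m + 2b x₂)⁻¹ dx₂, and consequently
exp(128 C₀ b²/t²) ≥ 1 + (bt/2)/m. -/
theorem modulus_of_convexity_integral_inequality
    (t C₀ b m τ : ℝ) (ht : 0 < t) (hC₀ : 0 < C₀) (hm : 0 < m)
    (hτ₀ : 0 < τ) (hτt : τ ≤ t)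
    (u : E2 → ℝ) (U : Set E2) (hU : IsOpen U) (hUt : closedBall (0:E2) t ⊆ U)
    (hu : ContDiffOn ℝ 2 u U)
    (hconv : ConvexOn ℝ (closedBall (0:E2) t) u)
    (hu0 : u 0 = 0)
    (hpos : ∀ x ∈ closedBall (0:E2) t, 0 ≤ u x)
    (hdet : ∀ x ∈ closedBall (0:E2) t, C₀⁻¹ ≤ detHess u x)
    (hb : ∀ x ∈ closedBall (0:E2) t, ‖gradient u x‖ ≤ b)
    (haxis : ∀ x₁ : ℝ, x₁ ∈ Set.Ioo (-τ) t → u (pt x₁ 0) ≤ m) :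
    (∫ x₂ in (0:ℝ)..(t / 4), (m + 2 * b * x₂)⁻¹) ≤ 64 * C₀ * b / t ^ 2 ∧
    1 + (b * t / 2) / m ≤ Real.exp (128 * C₀ * b ^ 2 / t ^ 2) := by
  have hbC : ∀ x ∈ closedBall (0:E2) t, ‖fderiv ℝ u x‖ ≤ b := by
    intro x hx
    have := hb x hx
    rwa [gradient, LinearIsometryEquiv.norm_map] at this
  have hcd : ∀ x ∈ closedBall (0:E2) t, ContDiffAt ℝ 2 u x := fun x hx =>
    hu.contDiffAt (hU.mem_nhds (hUt hx))
  have hdiff : ∀ x ∈ closedBall (0:E2) t, DifferentiableAt ℝ u x := fun x hx =>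
    (hcd x hx).differentiableAt (by norm_num)
  have hcd1 : ∀ x ∈ closedBall (0:E2) t, ContDiffAt ℝ 1 (fderiv ℝ u) x := fun x hx =>
    (hcd x hx).fderiv_right (by norm_num)
  have hdiff1 : ∀ x ∈ closedBall (0:E2) t, DifferentiableAt ℝ (fderiv ℝ u) x := fun x hx =>
    (hcd1 x hx).differentiableAt (by norm_num)
  have hcont2 : ContinuousOn (fderiv ℝ (fderiv ℝ u)) (closedBall (0:E2) t) := fun x hx =>
    (((hcd1 x hx).fderiv_right (m := 0) (by norm_num)).continuousAt).continuousWithinAt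
  have hb0 : 0 ≤ b := (norm_nonneg _).trans (hbC 0 (by simp [ht.le]))
  have hlip : ∀ x ∈ closedBall (0:E2) t, ∀ y ∈ closedBall (0:E2) t, u y - u x ≤ b * ‖y - x‖ := by
    intro x hx y hy
    have := (convex_closedBall (0:E2) t).norm_image_sub_le_of_norm_fderiv_le hdiff hbC hx hy
    exact (le_abs_self _).trans this
  have hbe : ∀ x ∈ closedBall (0:E2) t, ∀ i, |fderiv ℝ u x (e2 i)| ≤ b := by
    intro x hx i
    have := (fderiv ℝ u x).le_opNorm (e2 i)
    rw [aux_norm_e2, mul_one] at this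
    exact this.trans (hbC x hx)
  have hmem : ∀ x₁ x₂ : ℝ, |x₁| ≤ 7 * t / 8 → |x₂| ≤ t / 4 → pt x₁ x₂ ∈ closedBall (0:E2) t := by
    intro x₁ x₂ h1 h2
    apply aux_mem ht
    have := sq_le_sq' (abs_le.1 h1).1 (abs_le.1 h1).2
    have := sq_le_sq' (abs_le.1 h2).1 (abs_le.1 h2).2
    nlinarith
  set H : Fin 2 → ℝ → ℝ → ℝ := fun i x₁ x₂ =>
    fderiv ℝ (fderiv ℝ u) (pt x₁ x₂) (e2 i) (e2 i) with hH
  have hφ : ∀ x₁ x₂ : ℝ, pt x₁ x₂ ∈ closedBall (0:E2) t →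
      HasDerivAt (fun s => u (pt s x₂)) (fderiv ℝ u (pt x₁ x₂) (e2 0)) x₁ := by
    intro x₁ x₂ hx
    exact (hdiff _ hx).hasFDerivAt.comp_hasDerivAt x₁ (aux_deriv0 x₁ x₂)
  have hφ0 : ∀ x₁ x₂ : ℝ, pt x₁ x₂ ∈ closedBall (0:E2) t →
      HasDerivAt (fun s => fderiv ℝ u (pt s x₂) (e2 0)) (H 0 x₁ x₂) x₁ := by
    intro x₁ x₂ hx
    have := (hdiff1 _ hx).hasFDerivAt.comp_hasDerivAt x₁ (aux_deriv0 x₁ x₂)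
    simpa using this.clm_apply (hasDerivAt_const x₁ (e2 0))
  have hφ1 : ∀ x₁ x₂ : ℝ, pt x₁ x₂ ∈ closedBall (0:E2) t →
      HasDerivAt (fun s => fderiv ℝ u (pt x₁ s) (e2 1)) (H 1 x₁ x₂) x₂ := by
    intro x₁ x₂ hx
    have := (hdiff1 _ hx).hasFDerivAt.comp_hasDerivAt x₂ (aux_deriv1 x₁ x₂)
    simpa using this.clm_apply (hasDerivAt_const x₂ (e2 1))
  have hHc : ∀ i, ContinuousOn (fun p : ℝ × ℝ => H i p.1 p.2)
      (Icc (-(7 * t / 8)) (7 * t / 8) ×ˢ Icc (-(t / 4)) (t / 4)) := by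
    intro i
    have : ContinuousOn (fun p : ℝ × ℝ => fderiv ℝ (fderiv ℝ u) (pt p.1 p.2))
      (Icc (-(7 * t / 8)) (7 * t / 8) ×ˢ Icc (-(t / 4)) (t / 4)) := by
      refine hcont2.comp aux_cont.continuousOn ?_
      rintro ⟨p, q⟩ ⟨hp, hq⟩
      exact hmem _ _ (abs_le.2 hp) (abs_le.2 hq)
    exact (this.clm_apply continuousOn_const).clm_apply continuousOn_const
  have hconvφ : ∀ x₂ : ℝ, |x₂| ≤ t / 4 →
      ConvexOn ℝ (Icc (-(7 * t / 8)) (7 * t / 8)) (fun s => u (pt s x₂)) := by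
    intro x₂ hx₂
    refine ⟨convex_Icc _ _, ?_⟩
    intro x hx y hy a c ha hc hac
    have := hconv.2 (hmem x x₂ (abs_le.2 hx) hx₂) (hmem y x₂ (abs_le.2 hy) hx₂) ha hc hac
    have e : a • pt x x₂ + c • pt y x₂ = pt (a • x + c • y) x₂ := by
      ext i
      fin_cases i
      · simp [pt]
      · simp [pt, ← add_mul, hac]
    rwa [e] at this
  have hH0 : ∀ x₁ x₂ : ℝ, |x₁| < 7 * t / 8 → |x₂| ≤ t / 4 → 0 ≤ H 0 x₁ x₂ := by
    intro x₁ x₂ h1 h2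
    have hmono : MonotoneOn (fun s => fderiv ℝ u (pt s x₂) (e2 0))
        (Ioo (-(7 * t / 8)) (7 * t / 8)) := by
      have h3 := (hconvφ x₂ h2).monotoneOn_deriv (fun x hx =>
        (hφ x x₂ (hmem _ _ (abs_le.2 hx) h2)).differentiableAt)
      refine (h3.mono Ioo_subset_Icc_self).congr ?_
      intro x hx
      exact (hφ x x₂ (hmem _ _ (abs_le.2 ⟨hx.1.le, hx.2.le⟩) h2)).deriv
    have hx : x₁ ∈ Ioo (-(7 * t / 8)) (7 * t / 8) := abs_lt.1 h1
    have h4 := hmono.derivWithin_nonneg (x := x₁)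
    rwa [derivWithin_of_isOpen isOpen_Ioo hx, (hφ0 x₁ x₂ (hmem _ _ h1.le h2)).deriv] at h4
  have hpoint : ∀ x₁ x₂ : ℝ, |x₁| < 7 * t / 8 → |x₂| ≤ t / 4 → ∀ s : ℝ,
      C₀⁻¹ * (2 * s - s ^ 2 * H 0 x₁ x₂) ≤ H 1 x₁ x₂ := by
    intro x₁ x₂ h1 h2 s
    have hx := hmem x₁ x₂ h1.le h2
    have hd := hdet _ hx
    have hs := (hcd _ hx).isSymmSndFDerivAt (by simp)
    have hs' := hs (e2 0) (e2 1)
    simp only [detHess, hess, Matrix.det_fin_two, Matrix.of_apply, iteratedFDeriv_two_apply] at hd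
    simp only [Matrix.cons_val_zero, Matrix.cons_val_one] at hd
    rw [hs'] at hd
    exact aux_sign (inv_pos.2 hC₀) (hH0 _ _ h1 h2) hd s
  have hint0 : ∀ x₂, |x₂| ≤ t / 4 → ∀ i,
      IntervalIntegrable (fun s => H i s x₂) volume (t / 4) (3 * t / 4) := by
    intro x₂ h2 i
    apply ContinuousOn.intervalIntegrable
    rw [uIcc_of_le (by linarith)]
    refine (hHc i).comp (f := fun s : ℝ => (s, x₂)) (by fun_prop) ?_
    intro s hs
    exact ⟨⟨by linarith [hs.1], by linarith [hs.2]⟩, abs_le.1 h2⟩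
  have hG : ∀ x₂, 0 ≤ x₂ → x₂ ≤ t / 4 →
      ∫ s in (t / 4)..(3 * t / 4), H 0 s x₂ ≤ 16 * (m + 2 * b * x₂) / t := by
    intro x₂ h0 h2
    have h2' : |x₂| ≤ t / 4 := by rwa [abs_of_nonneg h0]
    rw [intervalIntegral.integral_eq_sub_of_hasDerivAt
      (f := fun s => fderiv ℝ u (pt s x₂) (e2 0)) _ (hint0 x₂ h2' 0)]
    · have hup : ∀ x₁, |x₁| ≤ 7 * t / 8 → u (pt x₁ x₂) ≤ u (pt x₁ 0) + b * x₂ := by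
        intro x₁ h1
        have := hlip _ (hmem x₁ 0 h1 (by simp; linarith)) _ (hmem x₁ x₂ h1 h2')
        have e : pt x₁ x₂ - pt x₁ 0 = pt 0 x₂ := by
          ext i
          fin_cases i <;> simp [pt]
        rw [e, aux_norm_pt] at this
        have e2 : Real.sqrt ((0:ℝ) ^ 2 + x₂ ^ 2) = x₂ := by
          rw [zero_pow two_ne_zero, zero_add, Real.sqrt_sq h0]
        rw [e2] at this
        linarith
      have a1 : |3 * t / 4| ≤ 7 * t / 8 := by rw [abs_of_pos (by linarith)]; linarith
      have a2 : |7 * t / 8| ≤ 7 * t / 8 := by rw [abs_of_pos (by linarith)]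
      have a3 : |t / 4| ≤ 7 * t / 8 := by rw [abs_of_pos (by linarith)]; linarith
      have a4 : |(0:ℝ)| ≤ 7 * t / 8 := by simp; linarith
      have b1 := (hconvφ x₂ h2').le_slope_of_hasDerivAt (abs_le.1 a1) (abs_le.1 a2)
        (by linarith) (hφ _ _ (hmem _ _ a1 h2'))
      have b2 := (hconvφ x₂ h2').slope_le_of_hasDerivAt (abs_le.1 a4) (abs_le.1 a3)
        (by linarith) (hφ _ _ (hmem _ _ a3 h2'))
      rw [slope_def_field, le_div_iff₀ (by linarith)] at b1
      rw [slope_def_field, div_le_iff₀ (by linarith)] at b2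
      have c1 := hup _ a2
      have c2 := hup _ a4
      have c3 := haxis (7 * t / 8) ⟨by linarith, by linarith⟩
      have c4 : u (pt 0 0) = 0 := by
        have e0 : pt 0 0 = 0 := by simp [aux_pt_eq]
        rw [e0, hu0]
      have c5 := hpos _ (hmem _ _ a1 h2')
      have c6 := hpos _ (hmem _ _ a3 h2')
      have c7 : 0 ≤ b * x₂ := mul_nonneg hb0 h0
      rw [le_div_iff₀ ht]
      nlinarith
    · intro s hs
      rw [uIcc_of_le (by linarith)] at hs
      exact hφ0 _ _ (hmem _ _ (abs_le.2 ⟨by linarith [hs.1], by linarith [hs.2]⟩) h2')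
  have hM : ∀ x₂, 0 ≤ x₂ → 0 < m + 2 * b * x₂ := by
    intro x₂ h
    have : 0 ≤ 2 * b * x₂ := by positivity
    linarith
  have hF : ∀ x₂, 0 ≤ x₂ → x₂ ≤ t / 4 →
      t ^ 3 / (64 * C₀) * (m + 2 * b * x₂)⁻¹ ≤ ∫ s in (t / 4)..(3 * t / 4), H 1 s x₂ := by
    intro x₂ h0 h2
    have h2' : |x₂| ≤ t / 4 := by rwa [abs_of_nonneg h0]
    have hMp := hM x₂ h0
    have hGx := hG x₂ h0 h2
    set M := m + 2 * b * x₂ with hMdef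
    obtain ⟨r, hr⟩ : ∃ r : ℝ, r = t ^ 2 / (32 * M) := ⟨_, rfl⟩
    have h5 : ∫ s in (t / 4)..(3 * t / 4), C₀⁻¹ * (2 * r - r ^ 2 * H 0 s x₂) ≤
        ∫ s in (t / 4)..(3 * t / 4), H 1 s x₂ := by
      apply intervalIntegral.integral_mono_on (by linarith)
      · exact ((intervalIntegrable_const).sub ((hint0 x₂ h2' 0).const_mul _)).const_mul _
      · exact hint0 x₂ h2' 1
      · intro s hs
        exact hpoint s x₂ (abs_lt.2 ⟨by linarith [hs.1], by linarith [hs.2]⟩) h2' r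
    rw [intervalIntegral.integral_const_mul, intervalIntegral.integral_sub
      intervalIntegrable_const ((hint0 x₂ h2' 0).const_mul _),
      intervalIntegral.integral_const_mul (r ^ 2), intervalIntegral.integral_const] at h5
    refine le_trans ?_ h5
    have h6 : r ^ 2 * ∫ s in (t / 4)..(3 * t / 4), H 0 s x₂ ≤ r ^ 2 * (16 * M / t) :=
      mul_le_mul_of_nonneg_left hGx (sq_nonneg r)
    have h7 : t ^ 3 / (64 * C₀) * M⁻¹ =
        C₀⁻¹ * ((3 * t / 4 - t / 4) * (2 * r) - r ^ 2 * (16 * M / t)) := by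
      rw [hr]; field_simp; ring
    rw [h7, smul_eq_mul]
    exact mul_le_mul_of_nonneg_left (by linarith) (inv_pos.2 hC₀).le
  have hsub : uIcc (t / 4) (3 * t / 4) ×ˢ uIcc 0 (t / 4) ⊆
      Icc (-(7 * t / 8)) (7 * t / 8) ×ˢ Icc (-(t / 4)) (t / 4) := by
    rw [uIcc_of_le (by linarith), uIcc_of_le (by linarith)]
    exact prod_mono (Icc_subset_Icc (by linarith) (by linarith))
      (Icc_subset_Icc (by linarith) le_rfl)
  have hintF : IntegrableOn (Function.uncurry (H 1)) (uIcc (t / 4) (3 * t / 4) ×ˢ uIcc 0 (t / 4)) :=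
    ((hHc 1).mono hsub).integrableOn_compact (isCompact_uIcc.prod isCompact_uIcc)
  have hswap := intervalIntegral_intervalIntegral_swap (F := H 1)
    (hintF.mono_set (prod_mono uIoc_subset_uIcc uIoc_subset_uIcc))
  have hle : ∫ x in (t / 4)..(3 * t / 4), ∫ y in (0:ℝ)..(t / 4), H 1 x y ≤ b * t := by
    have h8 : ‖∫ x in (t / 4)..(3 * t / 4), ∫ y in (0:ℝ)..(t / 4), H 1 x y‖ ≤
        (2 * b) * |3 * t / 4 - t / 4| := by
      apply intervalIntegral.norm_integral_le_of_norm_le_const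
      intro x hx
      rw [uIoc_of_le (by linarith)] at hx
      have hx' : |x| ≤ 7 * t / 8 := abs_le.2 ⟨by linarith [hx.1], by linarith [hx.2]⟩
      have hmm : ∀ y ∈ uIcc 0 (t / 4), pt x y ∈ closedBall (0:E2) t := by
        intro y hy
        rw [uIcc_of_le (by linarith)] at hy
        exact hmem _ _ hx' (abs_le.2 ⟨by linarith [hy.1], by linarith [hy.2]⟩)
      rw [intervalIntegral.integral_eq_sub_of_hasDerivAt
        (f := fun s => fderiv ℝ u (pt x s) (e2 1)) (fun y hy => hφ1 x y (hmm y hy))]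
      · have d1 := abs_le.1 (hbe _ (hmm 0 left_mem_uIcc) 1)
        have d2 := abs_le.1 (hbe _ (hmm _ right_mem_uIcc) 1)
        rw [Real.norm_eq_abs, abs_le]
        constructor <;> linarith
      · apply ContinuousOn.intervalIntegrable
        refine (hHc 1).comp (f := fun s : ℝ => (x, s)) (by fun_prop) ?_
        intro s hs
        rw [uIcc_of_le (by linarith)] at hs
        exact ⟨abs_le.1 hx', by linarith [hs.1], hs.2⟩
    have h9 := (le_abs_self _).trans h8
    rw [abs_of_pos (by linarith)] at h9
    linarith
  have hcontM : ContinuousOn (fun x₂ : ℝ => (m + 2 * b * x₂)⁻¹) (uIcc 0 (t / 4)) := by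
    apply ContinuousOn.inv₀ (by fun_prop)
    intro x hx
    rw [uIcc_of_le (by linarith)] at hx
    exact (hM x hx.1).ne'
  have hfirst : (∫ x₂ in (0:ℝ)..(t / 4), (m + 2 * b * x₂)⁻¹) ≤ 64 * C₀ * b / t ^ 2 := by
    have h10 : ∫ x₂ in (0:ℝ)..(t / 4), t ^ 3 / (64 * C₀) * (m + 2 * b * x₂)⁻¹ ≤
        ∫ y in (0:ℝ)..(t / 4), ∫ x in (t / 4)..(3 * t / 4), H 1 x y := by
      apply intervalIntegral.integral_mono_on (by linarith)
      · exact (hcontM.intervalIntegrable).const_mul _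
      · rw [intervalIntegrable_iff]
        have h11 := hintF.mono_set (prod_mono uIoc_subset_uIcc uIoc_subset_uIcc)
        rw [IntegrableOn, Measure.volume_eq_prod, ← Measure.prod_restrict] at h11
        have h12 := h11.integral_prod_right
        simp only [Function.uncurry_apply_pair] at h12
        rw [uIoc_of_le (by linarith : t / 4 ≤ 3 * t / 4)] at h12
        simp only [intervalIntegral.integral_of_le (by linarith : t / 4 ≤ 3 * t / 4)]
        exact h12
      · intro y hy
        exact hF y hy.1 hy.2
    rw [← hswap, intervalIntegral.integral_const_mul] at h10
    have h13 := h10.trans hle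
    rw [le_div_iff₀ (by positivity)]
    rw [div_mul_eq_mul_div, div_le_iff₀ (by positivity)] at h13
    nlinarith
  refine ⟨hfirst, ?_⟩
  rcases hb0.eq_or_lt with hb1 | hb1
  · rw [← hb1]; simp
  · have h14 : ∫ x₂ in (0:ℝ)..(t / 4), (m + 2 * b * x₂)⁻¹ =
        Real.log (1 + (b * t / 2) / m) / (2 * b) := by
      rw [intervalIntegral.integral_eq_sub_of_hasDerivAt
        (f := fun x => Real.log (m + 2 * b * x) / (2 * b)) _ hcontM.intervalIntegrable]
      · rw [← sub_div, ← Real.log_div (hM _ (by linarith)).ne' (hM _ le_rfl).ne']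
        congr 2
        field_simp
        ring
      · intro x hx
        rw [uIcc_of_le (by linarith)] at hx
        have h15 : HasDerivAt (fun x => m + 2 * b * x) (2 * b) x := by
          simpa using ((hasDerivAt_id x).const_mul (2 * b)).const_add m
        have h16 := (h15.log (hM x hx.1).ne').div_const (2 * b)
        rw [div_right_comm, div_self (by positivity), one_div] at h16
        exact h16
    rw [h14, div_le_iff₀ (by positivity)] at hfirst
    rw [← Real.log_le_iff_le_exp (by positivity)]
    refine hfirst.trans (le_of_eq ?_)
    field_simp
    norm_num
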